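/- arXiv:2105.03771 — 5 statements merged into one kernel-verified Lean document; each statement's English description precedes it below -/
import Mathlib

section
/- Let p be a prime and n, m natural numbers with 0 < n ≤ m. Then m = p^s·n for some s ∈ ℕ if and only if there exists a nonzero formal power series a ∈ 𝔽_p[[t]] such that, in the field of formal Laurent series 𝔽_p((t)), one has t^{−m} − t^{−n} = a^{−p} − a^{−1}. -/
theorem ps_pow_coeff (p : ℕ) [Fact p.Prime] (f : PowerSeries (ZMod p)) (k : ℕ) :
    PowerSeries.coeff k (f ^ p) = if p ∣ k then PowerSeries.coeff (k / p) f else 0 := by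
  have hp : p ≠ 0 := (Fact.out : p.Prime).ne_zero
  have h : (PowerSeries.expand p hp f) = f ^ p := by
    have h1 : MvPowerSeries.map (frobenius (ZMod p) p) (MvPowerSeries.expand p hp f) = f ^ p :=
      MvPowerSeries.map_frobenius_expand p hp
    rw [ZMod.frobenius_zmod, MvPowerSeries.map_id] at h1
    exact h1
  rw [← h, PowerSeries.coeff_expand]

theorem ls_pow_coeff (p : ℕ) [Fact p.Prime] (b : LaurentSeries (ZMod p)) (k : ℤ) :
    (b ^ p).coeff k = if (p : ℤ) ∣ k then b.coeff (k / p) else 0 := by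
  have hp : 0 < p := (Fact.out : p.Prime).pos
  have hp' : (0:ℤ) < p := by exact_mod_cast hp
  have hb := LaurentSeries.single_order_mul_powerSeriesPart b
  set o := b.order with ho
  set f := b.powerSeriesPart with hf
  have hbp : b ^ p = HahnSeries.single ((p:ℤ) * o) (1 : ZMod p) *
      ((f ^ p : PowerSeries (ZMod p)) : LaurentSeries (ZMod p)) := by
    rw [← hb, mul_pow, HahnSeries.single_pow, PowerSeries.coe_pow]
    simp
  have hc : ∀ j, b.coeff j = (f : LaurentSeries (ZMod p)).coeff (j - o) := by
    intro j
    conv_lhs => rw [← hb]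
    rw [HahnSeries.coeff_single_mul, one_mul]
  rw [hbp, HahnSeries.coeff_single_mul, one_mul, hc, PowerSeries.coeff_coe, PowerSeries.coeff_coe]
  by_cases hd : (p : ℤ) ∣ k
  · obtain ⟨c, rfl⟩ := hd
    rw [if_pos (Dvd.intro _ rfl), Int.mul_ediv_cancel_left _ hp'.ne', ← mul_sub]
    by_cases hneg : c - o < 0
    · rw [if_pos hneg, if_pos (by nlinarith)]
    · rw [if_neg hneg, if_neg (by push Not at hneg ⊢; positivity), ps_pow_coeff,
        Int.natAbs_mul, Int.natAbs_natCast, if_pos (Dvd.intro _ rfl), Nat.mul_div_cancel_left _ hp]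
  · rw [if_neg hd]
    split_ifs with h1
    · rfl
    · rw [ps_pow_coeff, if_neg]
      intro h2
      apply hd
      have h3 : (p : ℤ) ∣ k - p * o := Int.natCast_dvd.mpr h2
      simpa using dvd_add h3 (Dvd.intro o rfl : (p:ℤ) ∣ p * o)

theorem fwd_aux (p : ℕ) [Fact p.Prime] (n s : ℕ) :
    (∑ i ∈ Finset.range s, (HahnSeries.single (-((p ^ i * n : ℕ) : ℤ)) (1 : ZMod p) :
      LaurentSeries (ZMod p))) ^ p -
    (∑ i ∈ Finset.range s, (HahnSeries.single (-((p ^ i * n : ℕ) : ℤ)) (1 : ZMod p) :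
      LaurentSeries (ZMod p))) =
    HahnSeries.single (-((p ^ s * n : ℕ) : ℤ)) (1 : ZMod p) -
      HahnSeries.single (-(n : ℤ)) (1 : ZMod p) := by
  haveI : CharP (LaurentSeries (ZMod p)) p :=
    charP_of_injective_ringHom (HahnSeries.C_injective (Γ := ℤ) (R := ZMod p)) p
  rw [sum_pow_char, ← Finset.sum_sub_distrib]
  have : ∀ i, (HahnSeries.single (-((p ^ i * n : ℕ) : ℤ)) (1 : ZMod p) :
      LaurentSeries (ZMod p)) ^ p = HahnSeries.single (-((p ^ (i+1) * n : ℕ) : ℤ)) (1 : ZMod p) := by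
    intro i
    rw [HahnSeries.single_pow, one_pow]
    congr 1
    push_cast
    simp only [nsmul_eq_mul]
    ring
  simp only [this]
  rw [Finset.sum_range_sub (fun i => (HahnSeries.single (-((p ^ i * n : ℕ) : ℤ)) (1 : ZMod p) :
      LaurentSeries (ZMod p)))]
  simp

theorem exists_inv (p : ℕ) [Fact p.Prime] (n s : ℕ) (hn : 0 < n) :
    ∃ a : PowerSeries (ZMod p), a ≠ 0 ∧ (a : LaurentSeries (ZMod p))⁻¹ =
      ∑ i ∈ Finset.range (s+1), (HahnSeries.single (-((p ^ i * n : ℕ) : ℤ)) (1 : ZMod p) :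
      LaurentSeries (ZMod p)) := by
  have hp : 1 < p := (Fact.out : p.Prime).one_lt
  set u : PowerSeries (ZMod p) :=
    ∑ i ∈ Finset.range (s+1), PowerSeries.X ^ (p ^ s * n - p ^ i * n) with hu
  have hu0 : PowerSeries.constantCoeff u ≠ 0 := by
    rw [hu, Finset.sum_range_succ, map_add, map_sum, Finset.sum_eq_zero]
    · simp
    · intro i hi
      have h1 : p ^ i * n < p ^ s * n :=
        Nat.mul_lt_mul_of_pos_right (Nat.pow_lt_pow_right hp (Finset.mem_range.mp hi)) hn
      rw [map_pow, PowerSeries.constantCoeff_X, zero_pow (by omega)]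
  have h1 := PowerSeries.mul_inv_cancel u hu0
  have h2 : (u : LaurentSeries (ZMod p)) * ((u⁻¹ : PowerSeries (ZMod p)) : LaurentSeries (ZMod p)) = 1 := by
    rw [← PowerSeries.coe_mul, h1, PowerSeries.coe_one]
  have h3 : (∑ i ∈ Finset.range (s+1), (HahnSeries.single (-((p ^ i * n : ℕ) : ℤ)) (1 : ZMod p) :
      LaurentSeries (ZMod p))) * (HahnSeries.single (((p ^ s * n : ℕ) : ℤ)) (1 : ZMod p)) = u := by
    rw [hu, map_sum, Finset.sum_mul]
    refine Finset.sum_congr rfl fun i hi => ?_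
    have h1 : p ^ i * n ≤ p ^ s * n :=
        Nat.mul_le_mul_right _ (Nat.pow_le_pow_right hp.le (by simpa [Nat.lt_succ_iff] using hi))
    rw [HahnSeries.single_mul_single, HahnSeries.ofPowerSeries_X_pow, mul_one, Int.natCast_sub h1]
    congr 1
    ring
  have h4 : (∑ i ∈ Finset.range (s+1), (HahnSeries.single (-((p ^ i * n : ℕ) : ℤ)) (1 : ZMod p) :
      LaurentSeries (ZMod p))) *
      ((PowerSeries.X ^ (p ^ s * n) * u⁻¹ : PowerSeries (ZMod p)) : LaurentSeries (ZMod p)) = 1 := by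
    rw [PowerSeries.coe_mul, HahnSeries.ofPowerSeries_X_pow, ← mul_assoc, h3, h2]
  refine ⟨PowerSeries.X ^ (p ^ s * n) * u⁻¹, ?_, ?_⟩
  · intro h
    rw [h] at h4
    simp at h4
  · exact (eq_inv_of_mul_eq_one_left h4).symm

theorem bwd (p : ℕ) [Fact p.Prime] (n m : ℕ) (hn : 0 < n) (hnm : n ≤ m)
    (b : LaurentSeries (ZMod p))
    (h : (HahnSeries.single (-(m : ℤ)) (1 : ZMod p) : LaurentSeries (ZMod p)) -
      HahnSeries.single (-(n : ℤ)) (1 : ZMod p) = b ^ p - b) : ∃ s : ℕ, m = p ^ s * n := by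
  by_contra hs
  push Not at hs
  have hp : 1 < p := (Fact.out : p.Prime).one_lt
  have hmn : m ≠ n := by simpa using hs 0
  have key : ∀ j : ℕ, (if j = m then (1 : ZMod p) else 0) - (if j = n then 1 else 0) =
      (if p ∣ j then b.coeff (-((j / p : ℕ) : ℤ)) else 0) - b.coeff (-(j : ℤ)) := by
    intro j
    have := congrArg (fun x => HahnSeries.coeff x (-(j : ℤ))) h
    simp only [HahnSeries.coeff_sub, HahnSeries.coeff_single, ls_pow_coeff, neg_inj, Nat.cast_inj,
      dvd_neg, Int.natCast_dvd_natCast] at this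
    rw [this]
    congr 1
    split_ifs with hd
    · rw [Int.neg_ediv_of_dvd (by exact_mod_cast hd)]
      push_cast
      rfl
    · rfl
  have low : ∀ j : ℕ, 0 < j → j < n → b.coeff (-(j : ℤ)) = 0 := by
    intro j
    induction j using Nat.strong_induction_on with
    | _ j ih =>
      intro h0 h1
      have hk := key j
      rw [if_neg (by omega), if_neg (by omega)] at hk
      split_ifs at hk with hd
      · have hlt : j / p < j := Nat.div_lt_self h0 hp
        rw [ih (j / p) hlt (Nat.div_pos (Nat.le_of_dvd h0 hd) (by omega)) (by omega)] at hk
        simpa using hk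
      · simpa using hk
  have hcn : b.coeff (-(n : ℤ)) = 1 := by
    have hk := key n
    rw [if_neg (by omega), if_pos rfl] at hk
    split_ifs at hk with hd
    · rw [low (n / p) (Nat.div_pos (Nat.le_of_dvd hn hd) (by omega)) (Nat.div_lt_self hn hp)] at hk
      simpa using hk.symm
    · simpa using hk.symm
  have up : ∀ i : ℕ, b.coeff (-((p ^ i * n : ℕ) : ℤ)) = 1 := by
    intro i
    induction i with
    | zero => simpa using hcn
    | succ i ih =>
      have hk := key (p ^ (i + 1) * n)
      have e : p ^ (i + 1) * n = p * (p ^ i * n) := by ring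
      have hpos : 0 < p ^ i * n := by positivity
      have hge : n ≤ p ^ i * n := Nat.le_mul_of_pos_left _ (by positivity)
      rw [if_neg (hs (i+1)).symm, if_neg (by rw [e]; nlinarith), e, if_pos (Dvd.intro _ rfl),
        Nat.mul_div_cancel_left _ (by omega), ih] at hk
      rw [e]
      have := sub_eq_zero.mp (hk.symm.trans (sub_self _))
      exact this.symm
  have hN : (p ^ (b.order.natAbs) * n : ℕ) > b.order.natAbs :=
    lt_of_lt_of_le (Nat.lt_pow_self hp) (Nat.le_mul_of_pos_right _ hn)
  have := up b.order.natAbs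
  rw [HahnSeries.coeff_eq_zero_of_lt_order (by omega)] at this
  exact zero_ne_one this

theorem stmt3 (p : ℕ) [Fact p.Prime] (n m : ℕ) (hn : 0 < n) (hnm : n ≤ m) :
    (∃ s : ℕ, m = p ^ s * n) ↔
      ∃ a : PowerSeries (ZMod p), a ≠ 0 ∧
        ((PowerSeries.X : PowerSeries (ZMod p)) : LaurentSeries (ZMod p)) ^ (-(m : ℤ)) -
          ((PowerSeries.X : PowerSeries (ZMod p)) : LaurentSeries (ZMod p)) ^ (-(n : ℤ)) =
        ((a : LaurentSeries (ZMod p))⁻¹) ^ p - (a : LaurentSeries (ZMod p))⁻¹ := by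
  rw [PowerSeries.coe_X, ← RatFunc.single_zpow, ← RatFunc.single_zpow]
  constructor
  · rintro ⟨s, rfl⟩
    cases s with
    | zero => exact ⟨1, one_ne_zero, by simp⟩
    | succ s =>
      obtain ⟨a, ha, h⟩ := exists_inv p n s hn
      exact ⟨a, ha, by rw [h, fwd_aux]⟩
  · rintro ⟨a, -, h⟩
    exact bwd p n m hn hnm _ h
end

section
/- Let p be a prime, n ≥ 1 and s ≥ 1 natural numbers, and set m = p^s·n. In 𝔽_p((t)), let b = t^{−n·p^{s−1}} + t^{−n·p^{s−2}} + … + t^{−n} (i.e. b = Σ_{i=0}^{s−1} t^{−n·p^i}). Then b ≠ 0, b^p − b = t^{−m} − t^{−n}, and the t-adic valuation of b⁻¹ equals n·p^{s−1} > 0; in particular a := b⁻¹ is a formal power series with positive order satisfying t^{−m} − t^{−n} = a^{−p} − a^{−1}. -/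
theorem aux_orderTop (p : ℕ) [Fact p.Prime] (n : ℕ) (hn : 1 ≤ n) (k : ℕ) :
    (∑ i ∈ Finset.range (k + 1),
      ((PowerSeries.X : PowerSeries (ZMod p)) : LaurentSeries (ZMod p)) ^
        (-((n : ℤ) * (p : ℤ) ^ i))).orderTop = ((-((n : ℤ) * (p : ℤ) ^ k) : ℤ) : WithTop ℤ) := by
  induction k with
  | zero =>
    rw [Finset.sum_range_one, PowerSeries.coe_X, ← RatFunc.single_zpow,
      HahnSeries.orderTop_single one_ne_zero]
  | succ k ih =>
    have hp : (1 : ℤ) < p := by exact_mod_cast (Fact.out : p.Prime).one_lt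
    have hlast : (((PowerSeries.X : PowerSeries (ZMod p)) : LaurentSeries (ZMod p)) ^
        (-((n : ℤ) * (p : ℤ) ^ (k + 1)))).orderTop
        = ((-((n : ℤ) * (p : ℤ) ^ (k + 1)) : ℤ) : WithTop ℤ) := by
      rw [PowerSeries.coe_X, ← RatFunc.single_zpow, HahnSeries.orderTop_single one_ne_zero]
    rw [Finset.sum_range_succ, HahnSeries.orderTop_add_eq_right, hlast]
    rw [ih, hlast, WithTop.coe_lt_coe, neg_lt_neg_iff]
    have : (p : ℤ) ^ k < (p : ℤ) ^ (k + 1) := pow_lt_pow_right₀ hp (Nat.lt_succ_self k)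
    exact mul_lt_mul_of_pos_left this (by exact_mod_cast hn)

theorem stmt4 (p : ℕ) [Fact p.Prime] (n s : ℕ) (hn : 1 ≤ n) (hs : 1 ≤ s)
    (m : ℕ) (hm : m = p ^ s * n)
    (b : LaurentSeries (ZMod p))
    (hb : b = ∑ i ∈ Finset.range s,
      ((PowerSeries.X : PowerSeries (ZMod p)) : LaurentSeries (ZMod p)) ^
        (-((n : ℤ) * (p : ℤ) ^ i))) :
    b ≠ 0 ∧
    b ^ p - b =
      ((PowerSeries.X : PowerSeries (ZMod p)) : LaurentSeries (ZMod p)) ^ (-(m : ℤ)) -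
        ((PowerSeries.X : PowerSeries (ZMod p)) : LaurentSeries (ZMod p)) ^ (-(n : ℤ)) ∧
    (b⁻¹).order = (n : ℤ) * (p : ℤ) ^ (s - 1) ∧
    0 < (b⁻¹).order ∧
    ∃ a : PowerSeries (ZMod p), (a : LaurentSeries (ZMod p)) = b⁻¹ ∧ 0 < a.order ∧
      ((PowerSeries.X : PowerSeries (ZMod p)) : LaurentSeries (ZMod p)) ^ (-(m : ℤ)) -
        ((PowerSeries.X : PowerSeries (ZMod p)) : LaurentSeries (ZMod p)) ^ (-(n : ℤ)) =
      ((a : LaurentSeries (ZMod p))⁻¹) ^ p - (a : LaurentSeries (ZMod p))⁻¹ := by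
  have hpp : (0 : ℤ) < p := by exact_mod_cast (Fact.out : p.Prime).pos
  have hbo : b.orderTop = ((-((n : ℤ) * (p : ℤ) ^ (s - 1)) : ℤ) : WithTop ℤ) := by
    have := aux_orderTop p n hn (s - 1)
    rwa [Nat.sub_add_cancel hs, ← hb] at this
  have hb0 : b ≠ 0 := by
    rw [← HahnSeries.orderTop_ne_top, hbo]
    exact WithTop.coe_ne_top
  have hord : b.order = -((n : ℤ) * (p : ℤ) ^ (s - 1)) := by
    have := HahnSeries.order_eq_orderTop_of_ne_zero hb0
    rw [hbo] at this
    exact_mod_cast this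
  have hinv : (b⁻¹).order = (n : ℤ) * (p : ℤ) ^ (s - 1) := by
    have h := HahnSeries.order_mul hb0 (inv_ne_zero hb0)
    rw [mul_inv_cancel₀ hb0, HahnSeries.order_one, hord] at h
    linarith
  have hpos : 0 < (b⁻¹).order := by
    rw [hinv]
    have : (0 : ℤ) < n := by exact_mod_cast hn
    positivity
  have heq : b ^ p - b =
      ((PowerSeries.X : PowerSeries (ZMod p)) : LaurentSeries (ZMod p)) ^ (-(m : ℤ)) -
        ((PowerSeries.X : PowerSeries (ZMod p)) : LaurentSeries (ZMod p)) ^ (-(n : ℤ)) := by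
    have : CharP (LaurentSeries (ZMod p)) p :=
      charP_of_injective_ringHom (f := HahnSeries.C) HahnSeries.C_injective p
    rw [hb, sum_pow_char, ← Finset.sum_sub_distrib]
    have h1 : ∀ i ∈ Finset.range s,
        (((PowerSeries.X : PowerSeries (ZMod p)) : LaurentSeries (ZMod p)) ^
          (-((n : ℤ) * (p : ℤ) ^ i))) ^ p -
        ((PowerSeries.X : PowerSeries (ZMod p)) : LaurentSeries (ZMod p)) ^
          (-((n : ℤ) * (p : ℤ) ^ i)) =
        ((PowerSeries.X : PowerSeries (ZMod p)) : LaurentSeries (ZMod p)) ^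
          (-((n : ℤ) * (p : ℤ) ^ (i + 1))) -
        ((PowerSeries.X : PowerSeries (ZMod p)) : LaurentSeries (ZMod p)) ^
          (-((n : ℤ) * (p : ℤ) ^ i)) := by
      intro i _
      rw [← zpow_natCast, ← zpow_mul]
      congr 2
      ring
    rw [Finset.sum_congr rfl h1, Finset.sum_range_sub (fun i =>
      ((PowerSeries.X : PowerSeries (ZMod p)) : LaurentSeries (ZMod p)) ^
          (-((n : ℤ) * (p : ℤ) ^ i)))]
    subst hm
    congr 2
    · push_cast
      ring
    · ring
  refine ⟨hb0, heq, hinv, hpos, ?_⟩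
  obtain ⟨N, hN⟩ := Int.eq_ofNat_of_zero_le hpos.le
  have ha := LaurentSeries.X_order_mul_powerSeriesPart hN.symm
  refine ⟨_, ha, ?_, ?_⟩
  · have hN0 : 0 < N := by omega
    rw [PowerSeries.order_mul, PowerSeries.order_X_pow]
    exact lt_of_lt_of_le (by exact_mod_cast hN0) le_self_add
  · rw [ha, inv_inv, heq]
end

section
/- Let p be a prime and n, m, N natural numbers with 0 < n ≤ m and 3m < N. Let R = 𝔽_p[t]/(t^N) and write t for the residue class of the variable in R. Then m = p^s·n for some s ∈ ℕ if and only if there exists α ∈ R such that α^p·(t^n − t^m) = t^n·t^m·(1 − α^{p−1}) and α^{3p} ≠ 0 in R. -/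
open Polynomial

theorem aux_inv (p : ℕ) [Fact p.Prime] (M : ℕ) (f : Polynomial (ZMod p)) (hf : ¬ X ∣ f) :
    ∃ g : Polynomial (ZMod p), X ^ M ∣ f * g - 1 := by
  have h1 : IsCoprime (X : Polynomial (ZMod p)) f :=
    (Polynomial.irreducible_X.coprime_iff_not_dvd).2 hf
  obtain ⟨a, b, hab⟩ := h1.pow_left (m := M)
  exact ⟨b, -a, by linear_combination hab⟩

theorem aux_fwd (p : ℕ) [Fact p.Prime] (n r : ℕ) :
    ∃ W : Polynomial (ZMod p), ¬ X ∣ W ∧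
      W ^ p - X ^ (p ^ r * n * (p - 1)) * W = 1 - X ^ (p ^ (r + 1) * n - n) ∨ n = 0 := by
  have hp := (Fact.out : p.Prime)
  by_cases hn : n = 0
  · exact ⟨0, Or.inr hn⟩
  refine ⟨∑ i ∈ Finset.range (r + 1), X ^ (p ^ r * n - p ^ i * n), Or.inl ⟨?_, ?_⟩⟩
  · rw [Finset.sum_range_succ]
    intro h
    rw [Polynomial.X_dvd_iff] at h
    simp only [le_refl, tsub_self, pow_zero, coeff_add, finsetSum_coeff, coeff_one_zero] at h
    rw [Finset.sum_eq_zero] at h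
    · simp at h
    · intro i hi
      have : p ^ i * n < p ^ r * n :=
        Nat.mul_lt_mul_of_pos_right (Nat.pow_lt_pow_right hp.one_lt (Finset.mem_range.1 hi)) (by omega)
      rw [coeff_X_pow, if_neg (by omega)]
  · rw [sum_pow_char, Finset.mul_sum, ← Finset.sum_sub_distrib]
    have key : ∀ i ∈ Finset.range (r + 1),
        ((X : Polynomial (ZMod p)) ^ (p ^ r * n - p ^ i * n)) ^ p -
          X ^ (p ^ r * n * (p - 1)) * X ^ (p ^ r * n - p ^ i * n) =
        (fun i => X ^ (p ^ (r + 1) * n - p ^ i * n)) (i + 1) -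
          (fun i => (X : Polynomial (ZMod p)) ^ (p ^ (r + 1) * n - p ^ i * n)) i := by
      intro i hi
      have hle : p ^ i * n ≤ p ^ r * n :=
        Nat.mul_le_mul_right _ (Nat.pow_le_pow_right hp.pos (by simpa [Nat.lt_succ_iff] using hi))
      have e1 : p ^ r * n * (p - 1) + p ^ r * n = p ^ (r + 1) * n := by
        obtain ⟨q, rfl⟩ : ∃ q, p = q + 1 := ⟨p - 1, by have := hp.pos; omega⟩
        simp only [Nat.add_sub_cancel]; ring
      have e2 : (p ^ r * n - p ^ i * n) * p = p ^ (r + 1) * n - p ^ (i + 1) * n := by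
        rw [Nat.sub_mul]; congr 1 <;> ring
      simp only
      rw [← pow_mul, ← pow_add, e2, ← Nat.add_sub_assoc hle, e1]
    rw [Finset.sum_congr rfl key]
    refine (Finset.sum_range_sub
      (fun i => (X : Polynomial (ZMod p)) ^ (p ^ (r + 1) * n - p ^ i * n)) (r + 1)).trans ?_
    simp

theorem aux_bwd (p : ℕ) [Fact p.Prime] (n m N : ℕ) (hn : 0 < n) (hnm : n < m)
    (hN : 3 * m < N) (a : Polynomial (ZMod p))
    (h : X ^ N ∣ a ^ p * (X ^ n - X ^ m) - X ^ n * X ^ m * (1 - a ^ (p - 1))) :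
    ∃ s : ℕ, m = p ^ s * n := by
  have hp := (Fact.out : p.Prime)
  have hX : Prime (X : Polynomial (ZMod p)) := Polynomial.prime_X
  have hp2 := hp.two_le
  have hcan : ∀ k (f : Polynomial (ZMod p)), X ^ (k + 1) ∣ X ^ k * f → X ∣ f := by
    intro k f hf
    rw [pow_succ] at hf
    exact (mul_dvd_mul_iff_left (pow_ne_zero _ hX.ne_zero)).1 hf
  -- second kind of contradiction
  have hbad : X ∣ a → ¬ X ^ (n + m + 1) ∣ a ^ p * (X ^ n - X ^ m) := by
    intro ha h1
    have h2 : X ^ (n + m + 1) ∣ X ^ (n + m) * (1 - a ^ (p - 1)) := by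
      have := dvd_sub h1 ((pow_dvd_pow X (by omega : n + m + 1 ≤ N)).trans h)
      rw [sub_sub_cancel, ← pow_add] at this
      exact this
    have h3 := hcan _ _ h2
    have h4 : X ∣ a ^ (p - 1) := dvd_pow ha (by omega)
    have := dvd_add h3 h4
    rw [sub_add_cancel] at this
    exact hX.not_isUnit (isUnit_of_dvd_one this)
  have ha0 : a ≠ 0 := by
    rintro rfl
    apply hbad (dvd_zero _)
    rw [zero_pow (by omega), zero_mul]
    exact dvd_zero _
  obtain ⟨v, u, hu, rfl⟩ := (FiniteMultiplicity.of_prime_left hX ha0).exists_eq_pow_mul_and_not_dvd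
    |> fun ⟨c, h1, h2⟩ => (⟨_, c, h2, h1⟩ : ∃ v u, ¬ X ∣ u ∧ a = X ^ v * u)
  have hXX : (X : Polynomial (ZMod p)) ^ n - X ^ m = X ^ n * (1 - X ^ (m - n)) := by
    rw [mul_sub, mul_one, ← pow_add, Nat.add_sub_cancel' hnm.le]
  have hv : m = p * v := by
    rcases lt_trichotomy (p * v) m with hlt | heq | hgt
    · exfalso
      have h1 : X ^ (p * v + n + 1) ∣ X ^ (p * v + n) * (u ^ p * (1 - X ^ (m - n))) := by
        have h2 := (pow_dvd_pow X (by omega : p * v + n + 1 ≤ N)).trans h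
        have h3 : (X : Polynomial (ZMod p)) ^ (p * v + n + 1) ∣
            X ^ n * X ^ m * (1 - (X ^ v * u) ^ (p - 1)) := by
          rw [← pow_add]
          exact Dvd.dvd.mul_right (pow_dvd_pow X (by omega)) _
        have h4 := dvd_add h2 h3
        rw [sub_add_cancel, hXX] at h4
        convert h4 using 1
        ring
      rcases hX.dvd_or_dvd (hcan _ _ h1) with h2 | h2
      · exact hu (hX.dvd_of_dvd_pow h2)
      · have := dvd_add h2 (dvd_pow_self X (by omega : m - n ≠ 0))
        rw [sub_add_cancel] at this
        exact hX.not_isUnit (isUnit_of_dvd_one this)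
    · exact heq.symm
    · exfalso
      have hv0 : v ≠ 0 := by rintro rfl; omega
      refine hbad ((dvd_pow_self X hv0).mul_right _) ?_
      rw [hXX]
      have : (X ^ v * u) ^ p * (X ^ n * (1 - X ^ (m - n))) =
        X ^ (p * v + n) * (u ^ p * (1 - X ^ (m - n))) := by ring
      rw [this]
      exact (pow_dvd_pow X (by omega)).mul_right _
  have hv0 : 0 < v := Nat.pos_of_ne_zero (by rintro rfl; omega)
  have hvm : v < m := by rw [hv]; nlinarith
  obtain ⟨w, hw⟩ := aux_inv p N u hu
  have hmain : X ^ (n + m + 1) ∣ X ^ n - X ^ m - X ^ n * w ^ p + X ^ (n + (m - v)) * w := by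
    have h0 : X ^ (m + (n + m + 1)) ∣ X ^ m *
        (u ^ p * (X ^ n - X ^ m) - X ^ n + X ^ (n + (m - v)) * u ^ (p - 1)) := by
      refine ((pow_dvd_pow X (by omega : m + (n + m + 1) ≤ N)).trans h).trans (dvd_of_eq ?_)
      have e : m - v = v * (p - 1) := by rw [Nat.mul_sub, mul_one, mul_comm, ← hv]
      rw [e, mul_pow, mul_pow, ← pow_mul, ← pow_mul, mul_comm v p, ← hv]
      ring
    rw [pow_add, mul_dvd_mul_iff_left (pow_ne_zero _ hX.ne_zero)] at h0
    have h1 : X ^ (n + m + 1) ∣ u * w - 1 := (pow_dvd_pow X (by omega)).trans hw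
    have h2 : ∀ k, X ^ (n + m + 1) ∣ (u * w) ^ k - 1 := fun k =>
      h1.trans (by simpa using sub_dvd_pow_sub_pow (u * w) 1 k)
    obtain ⟨c, hc⟩ := h0
    obtain ⟨d, hd⟩ := h2 p
    obtain ⟨e, he⟩ := h2 (p - 1)
    obtain ⟨q, rfl⟩ : ∃ q, p = q + 1 := ⟨p - 1, by omega⟩
    simp only [Nat.add_sub_cancel] at *
    refine ⟨c * w ^ (q + 1) - d * (X ^ n - X ^ m) - X ^ (n + (m - v)) * w * e, ?_⟩
    rw [mul_pow] at hd he
    linear_combination w ^ (q + 1) * hc - (X ^ n - X ^ m) * hd - X ^ (n + (m - v)) * w * he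
  have hco : ∀ i, i ≤ m → (if i = 0 then 1 else 0) - (if n + i = m then 1 else 0)
      - (if p ∣ i then w.coeff (i / p) else 0) +
      (if m - v ≤ i then w.coeff (i - (m - v)) else 0) = 0 := by
    intro i hi
    have := (X_pow_dvd_iff.1 hmain) (n + i) (by omega)
    rw [← ZMod.expand_card, coeff_add, coeff_sub, coeff_sub, coeff_X_pow, coeff_X_pow,
      mul_comm (X ^ n) _, add_comm n i, coeff_mul_X_pow, coeff_expand hp.pos,
      mul_comm _ w, coeff_mul_X_pow'] at this
    have e1 : (i + n = n) = (i = 0) := propext (by omega)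
    have e2 : (i + n = m) = (n + i = m) := propext (by omega)
    have e3 : (n + (m - v) ≤ i + n) = (m - v ≤ i) := propext (by omega)
    have e4 : i + n - (n + (m - v)) = i - (m - v) := by omega
    simp only [e1, e2, e3, e4] at this
    exact this
  have hc : ∀ k, 0 < k → k ≤ m → (if k = m then 1 else 0) - (if k = n then 1 else 0)
      - (if p ∣ k then w.coeff (v - k / p) else 0) +
      (if k ≤ v then w.coeff (v - k) else 0) = 0 := by
    intro k hk hkm
    have := hco (m - k) (by omega)
    have e1 : (m - k = 0) = (k = m) := propext (by omega)
    have e2 : (n + (m - k) = m) = (k = n) := propext (by omega)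
    have e3 : (m - v ≤ m - k) = (k ≤ v) := propext (by omega)
    have e4 : m - k - (m - v) = v - k := by omega
    have e5 : (p ∣ m - k) = (p ∣ k) := propext (Nat.dvd_sub_iff_right hkm ⟨v, hv⟩)
    have e6 : (if p ∣ k then w.coeff ((m - k) / p) else 0) =
        (if p ∣ k then w.coeff (v - k / p) else 0) := by
      split_ifs with hd
      · obtain ⟨j, rfl⟩ := hd
        rw [hv, ← Nat.mul_sub, Nat.mul_div_cancel_left _ hp.pos, Nat.mul_div_cancel_left _ hp.pos]
      · rfl
    simp only [e1, e2, e3, e5, e6] at this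
    by_cases hkv : k ≤ v
    · simp only [if_pos hkv, e4] at this ⊢
      exact this
    · simp only [if_neg hkv] at this ⊢
      exact this
  have hP : ∀ k, 0 < k → k ≤ v → w.coeff (v - k) ≠ 0 → ∃ s, k = p ^ s * n := by
    intro k
    induction k using Nat.strong_induction_on with
    | _ k ih =>
      intro hk hkv hne
      by_cases hkn : k = n
      · exact ⟨0, by simp [hkn]⟩
      have := hc k hk (by omega)
      rw [if_neg (by omega), if_neg hkn, if_pos hkv] at this
      by_cases hd : p ∣ k
      · obtain ⟨j, rfl⟩ := hd
        rw [if_pos (Dvd.intro _ rfl), Nat.mul_div_cancel_left _ hp.pos] at this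
        have hj : 0 < j := Nat.pos_of_ne_zero (by rintro rfl; omega)
        have hjl : j < p * j := by nlinarith
        obtain ⟨s, hs⟩ := ih j hjl hj (by omega) (by
          intro h0; rw [h0] at this; apply hne; simpa using this)
        exact ⟨s + 1, by rw [pow_succ]; nth_rw 1 [hs]; ring⟩
      · rw [if_neg hd] at this
        exact absurd (by simpa using this) hne
  obtain ⟨s, hs⟩ := hP v hv0 le_rfl (by
    intro h0
    have := hc m (by omega) le_rfl
    rw [if_pos rfl, if_neg (by omega), if_pos ⟨v, hv⟩, if_neg (by omega)] at this
    have e : m / p = v := by rw [hv, Nat.mul_div_cancel_left _ hp.pos]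
    rw [e, h0] at this
    simp at this)
  exact ⟨s + 1, by rw [hv, pow_succ]; nth_rw 1 [hs]; ring⟩

theorem stmt5 (p : ℕ) [Fact p.Prime] (n m N : ℕ) (hn : 0 < n) (hnm : n ≤ m)
    (hN : 3 * m < N) :
    (∃ s : ℕ, m = p ^ s * n) ↔
      ∃ α : Polynomial (ZMod p) ⧸ Ideal.span {(X : Polynomial (ZMod p)) ^ N},
        (letI t := Ideal.Quotient.mk (Ideal.span {(X : Polynomial (ZMod p)) ^ N})
            (X : Polynomial (ZMod p));
          α ^ p * (t ^ n - t ^ m) = t ^ n * t ^ m * (1 - α ^ (p - 1)) ∧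
            α ^ (3 * p) ≠ 0) := by
  have hp := (Fact.out : p.Prime)
  have hX : Prime (X : Polynomial (ZMod p)) := Polynomial.prime_X
  have hz : ∀ f : Polynomial (ZMod p), Ideal.Quotient.mk (Ideal.span {X ^ N}) f = 0 ↔ X ^ N ∣ f :=
    fun f => by rw [Ideal.Quotient.eq_zero_iff_mem, Ideal.mem_span_singleton]
  have hXd : ∀ k, X ^ N ∣ (X : Polynomial (ZMod p)) ^ k → N ≤ k := fun k hk =>
    (pow_dvd_pow_iff hX.ne_zero hX.not_isUnit).1 hk
  constructor
  · rintro ⟨s, hs⟩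
    rcases s with _ | r
    · have : m = n := by simpa using hs
      subst this
      refine ⟨1, by simp, ?_⟩
      rw [one_pow]
      intro h1
      rw [← map_one (Ideal.Quotient.mk _), hz] at h1
      have := hXd 0 (by simpa using h1)
      omega
    · obtain ⟨W, ⟨hW, hW2⟩ | h0⟩ := aux_fwd p n r
      swap
      · omega
      obtain ⟨u, hu⟩ := aux_inv p N W hW
      have hu' : Ideal.Quotient.mk (Ideal.span {(X : Polynomial (ZMod p)) ^ N}) W *
          Ideal.Quotient.mk _ u = 1 := by
        rw [← map_mul, ← sub_eq_zero, ← map_one (Ideal.Quotient.mk _), ← map_sub, hz]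
        exact hu
      have hW3 := congrArg (Ideal.Quotient.mk (Ideal.span {(X : Polynomial (ZMod p)) ^ N})) hW2
      simp only [map_sub, map_mul, map_pow, map_one] at hW3
      have htt : ∀ k, (Ideal.Quotient.mk (Ideal.span {(X : Polynomial (ZMod p)) ^ N}) X) ^ k = 0 →
          N ≤ k := fun k hk => hXd k (by rw [← hz, map_pow]; exact hk)
      rw [← hs] at hW3
      have hm : p ^ r * n * p = m := by rw [hs]; ring
      refine ⟨Ideal.Quotient.mk _ X ^ (p ^ r * n) * Ideal.Quotient.mk _ u, ?_⟩
      generalize Ideal.Quotient.mk (Ideal.span {(X : Polynomial (ZMod p)) ^ N}) X = t at *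
      generalize Ideal.Quotient.mk (Ideal.span {(X : Polynomial (ZMod p)) ^ N}) u = y at *
      generalize Ideal.Quotient.mk (Ideal.span {(X : Polynomial (ZMod p)) ^ N}) W = w at *
      generalize p ^ r * n = v at *
      have hyp : ∀ k, w ^ k * y ^ k = 1 := fun k => by rw [← mul_pow, hu', one_pow]
      refine ⟨?_, ?_⟩
      · have e1 : t ^ n - t ^ m = t ^ n * (w ^ p - t ^ (v * (p - 1)) * w) := by
          rw [hW3, mul_sub, ← pow_add, Nat.add_sub_cancel' hnm, mul_one]
        rw [e1, mul_pow, mul_pow, ← pow_mul, ← pow_mul, hm]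
        have h1 := hyp p
        obtain ⟨q, rfl⟩ : ∃ q, p = q + 1 := ⟨p - 1, by have := hp.pos; omega⟩
        simp only [Nat.add_sub_cancel] at *
        linear_combination t ^ m * t ^ n * h1 - t ^ m * t ^ n * t ^ (v * q) * y ^ q * hu'
      · intro h0
        have : t ^ (3 * m) = 0 := by
          have e : t ^ (3 * m) = (t ^ v * y) ^ (3 * p) * w ^ (3 * p) := by
            rw [mul_pow, mul_assoc, mul_comm (y ^ _), hyp, mul_one, ← pow_mul, ← hm]
            congr 1; ring
          rw [e, h0, zero_mul]
        have := htt _ this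
        omega
  · rintro ⟨α, h, -⟩
    rcases hnm.eq_or_lt with rfl | hlt
    · exact ⟨0, by simp⟩
    obtain ⟨a, rfl⟩ := Ideal.Quotient.mk_surjective α
    refine aux_bwd p n m N hn hlt hN a ?_
    rw [← hz]
    simp only [map_sub, map_mul, map_pow, map_one]
    exact sub_eq_zero.2 h
end

section
/- Let p be a prime, K a finite extension of ℚ_p of degree N that is totally ramified (i.e. the ideal of 𝒪_K generated by p equals the N-th power of the maximal ideal of 𝒪_K, where N = [K:ℚ_p]), and let π be a uniformizer of 𝒪_K. Let n, m be natural numbers with 0 < n ≤ m and 3m < N. Then m = p^s·n for some s ∈ ℕ if and only if there exists α ∈ 𝒪_K such that α^p·(π^n − π^m) ≡ π^{n+m}·(1 − α^{p−1}) (mod p𝒪_K) and α^{3p} ≢ 0 (mod p𝒪_K). -/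
open Polynomial in
theorem poly_fwd (p : ℕ) [Fact p.Prime] (N n m : ℕ) (hn : 0 < n) (hmN : 3 * m < N)
    (h : ∃ s : ℕ, m = p ^ s * n) : ∃ α : (ZMod p)[X],
    X ^ N ∣ α ^ p * (X ^ n - X ^ m) - X ^ (n + m) * (1 - α ^ (p - 1)) ∧ ¬ X ^ N ∣ α ^ (3 * p) := by
  obtain ⟨s, rfl⟩ := h
  have hp : p.Prime := Fact.out
  rcases s with _ | s
  · refine ⟨1, by simp, ?_⟩
    rw [one_pow]
    intro h
    have := (X_dvd_iff (R := ZMod p)).1 ((dvd_pow_self X (by omega)).trans h)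
    simp at this
  · set q := p ^ s * n with hq
    have hm : p ^ (s+1) * n = p * q := by rw [hq, pow_succ]; ring
    rw [hm] at hmN ⊢
    have hle : ∀ i ∈ Finset.range (s+1), p ^ i * n ≤ q := fun i hi =>
      Nat.mul_le_mul_right _ (Nat.pow_le_pow_right hp.pos (by simp at hi; omega))
    set w : (ZMod p)[X] := ∑ i ∈ Finset.range (s+1), X ^ (q - p ^ i * n) with hw
    have hw0 : ¬ X ∣ w := by
      rw [X_dvd_iff, hw, finsetSum_coeff, Finset.sum_range_succ, Finset.sum_eq_zero]
      · simp [hq]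
      · intro i hi
        have : p ^ i * n < q := Nat.mul_lt_mul_of_pos_right
          (Nat.pow_lt_pow_right hp.one_lt (by simpa using hi)) hn
        rw [coeff_X_pow, if_neg]; omega
    have hpq : q ≤ p * q := Nat.le_mul_of_pos_left _ hp.pos
    have hwp : X ^ n * w ^ p - X ^ (n + (p * q - q)) * w = X ^ n - X ^ (p * q) := by
      rw [hw, sum_pow_char, Finset.mul_sum, Finset.mul_sum, ← Finset.sum_sub_distrib]
      have : ∀ i ∈ Finset.range (s+1), (X ^ n * (X ^ (q - p ^ i * n)) ^ p -
          X ^ (n + (p * q - q)) * X ^ (q - p ^ i * n) : (ZMod p)[X]) =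
          (fun i => X ^ (n + p * q - p ^ i * n)) (i+1) - (fun i => X ^ (n + p * q - p ^ i * n)) i := by
        intro i hi
        have h1 := hle i hi
        have h2 : p * (p ^ i * n) ≤ p * q := Nat.mul_le_mul_left _ h1
        have h3 : p ^ (i+1) * n = p * (p ^ i * n) := by ring
        simp only [← pow_mul, ← pow_add, h3]
        congr 2
        · rw [Nat.sub_mul, mul_comm q p, mul_comm (p ^ i * n) p]; omega
        · omega
      rw [Finset.sum_congr rfl this, Finset.sum_range_sub (fun i => (X ^ (n + p * q - p ^ i * n) : (ZMod p)[X]))]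
      simp only [hm]
      congr 2
      · omega
      · simp
    obtain ⟨u, b, hub⟩ : IsCoprime w (X ^ N) :=
      ((prime_X.irreducible.coprime_iff_not_dvd).2 hw0).symm.pow_right
    have hN0 : N ≠ 0 := by omega
    have hu0 : ¬ X ∣ u := by
      intro h
      have : (X : (ZMod p)[X]) ∣ 1 := hub ▸ dvd_add (h.mul_right w) ((dvd_pow_self X hN0).mul_left b)
      exact prime_X.not_dvd_one this
    refine ⟨X ^ q * u, ?_, ?_⟩
    · have hd : X ^ N ∣ u * w - 1 := ⟨-b, by linear_combination hub⟩
      have hdp : X ^ N ∣ (u * w) ^ p - 1 := hd.trans (by simpa using sub_dvd_pow_sub_pow (u*w) 1 p)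
      have e1 : p = (p - 1) + 1 := by have := hp.pos; omega
      have e2 : q * (p - 1) = p * q - q := by rw [Nat.mul_sub, mul_comm]; simp
      have e3 : (u:(ZMod p)[X]) ^ p = u ^ (p-1) * u := by rw [← pow_succ, ← e1]
      have : (X ^ q * u) ^ p * (X ^ n - X ^ (p * q)) - X ^ (n + p * q) * (1 - (X ^ q * u) ^ (p - 1))
        = X ^ (n + p * q) * ((u * w) ^ p - 1) - X ^ (n + p * q) * X ^ (p * q - q) * u ^ (p-1) * (u * w - 1) := by
        rw [← hwp, mul_pow, mul_pow, ← pow_mul, ← pow_mul, e2, mul_pow u w, mul_comm q p, pow_add, pow_add]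
        linear_combination (-X ^ n * X ^ (p * q) * X ^ (p * q - q) * w) * e3
      rw [this]
      exact dvd_sub (hdp.mul_left _) (hd.mul_left _)
    · intro h
      rw [mul_pow, ← pow_mul] at h
      have h4 : q * (3 * p) < N := by rw [show q * (3 * p) = 3 * (p * q) by ring]; exact hmN
      have := (prime_X (R := ZMod p)).pow_dvd_of_dvd_mul_right N (fun h => hu0 (prime_X.dvd_of_dvd_pow h)) h
      rw [pow_dvd_pow_iff X_ne_zero prime_X.not_isUnit] at this
      omega

open Polynomial in
theorem poly_bwd (p : ℕ) [Fact p.Prime] (N n m : ℕ) (hn : 0 < n) (hnm : n ≤ m) (hmN : 3 * m < N)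
    (α : (ZMod p)[X])
    (h1 : X ^ N ∣ α ^ p * (X ^ n - X ^ m) - X ^ (n + m) * (1 - α ^ (p - 1)))
    (h2 : ¬ X ^ N ∣ α ^ (3 * p)) : ∃ s : ℕ, m = p ^ s * n := by
  have hp : p.Prime := Fact.out
  by_contra! hs
  have hnm' : n < m := lt_of_le_of_ne hnm (fun h => hs 0 (by simp [h]))
  have hα : α ≠ 0 := by rintro rfl; apply h2; rw [zero_pow (by have := hp.pos; omega)]; simp
  obtain ⟨a, u, hu, rfl⟩ : ∃ (a : ℕ) (u : (ZMod p)[X]), ¬ X ∣ u ∧ α = X ^ a * u := by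
    obtain ⟨a, u, hu, h⟩ := WfDvdMonoid.max_power_factor hα prime_X.irreducible
    exact ⟨a, u, hu, h⟩
  have ha : 3 * (p * a) < N := by
    by_contra! hc
    apply h2
    rw [mul_pow, ← pow_mul]
    exact (pow_dvd_pow _ (by linarith)).mul_right _
  obtain ⟨v, b, hub⟩ : IsCoprime u (X ^ N) :=
      ((prime_X.irreducible.coprime_iff_not_dvd).2 hu).symm.pow_right
  have hd : X ^ N ∣ v * u - 1 := ⟨-b, by linear_combination hub⟩
  have hdp : X ^ N ∣ (v * u) ^ p - 1 := hd.trans (by simpa using sub_dvd_pow_sub_pow (v*u) 1 p)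
  have hdp1 : X ^ N ∣ (v * u) ^ (p-1) - 1 := hd.trans (by simpa using sub_dvd_pow_sub_pow (v*u) 1 (p-1))
  have e1 : p = (p - 1) + 1 := by have := hp.pos; omega
  have e3 : (v:(ZMod p)[X]) ^ p = v ^ (p-1) * v := by rw [← pow_succ, ← e1]
  have h3 : X ^ N ∣ X ^ (p * a) * (X ^ n - X ^ m) - X ^ (n + m) * (v ^ p - X ^ (a * (p - 1)) * v) := by
    have : X ^ (p * a) * (X ^ n - X ^ m) - X ^ (n + m) * (v ^ p - X ^ (a * (p - 1)) * v) =
      v ^ p * ((X ^ a * u) ^ p * (X ^ n - X ^ m) - X ^ (n + m) * (1 - (X ^ a * u) ^ (p - 1)))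
       - X ^ (p * a) * (X ^ n - X ^ m) * ((v * u) ^ p - 1)
       - X ^ (n + m) * X ^ (a * (p - 1)) * v * ((v * u) ^ (p-1) - 1) := by
      rw [mul_pow, mul_pow, mul_pow, mul_pow, ← pow_mul, ← pow_mul, mul_comm a p]
      linear_combination (-X ^ (n + m) * X ^ (a * (p - 1)) * u ^ (p-1)) * e3
    rw [this]
    exact dvd_sub (dvd_sub (h1.mul_left _) (hdp.mul_left _)) (hdp1.mul_left _)
  have hvp : v ^ p = expand (ZMod p) p v := (ZMod.expand_card v).symm
  have e2 : a * (p - 1) = p * a - a := by rw [Nat.mul_sub, mul_comm]; simp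
  have hpa : a ≤ p * a := Nat.le_mul_of_pos_left _ hp.pos
  rw [hvp, X_pow_dvd_iff] at h3
  set c : ℕ → ZMod p := fun j => if j ≤ a then v.coeff (a - j) else 0 with hc
  have key : ∀ j, 1 ≤ j → (if p ∣ j then c (j / p) else 0) - c j =
      (if j = m then 1 else 0) - (if j = n then 1 else 0) := by
    intro j hj
    by_cases hjl : j ≤ p * a + n + m
    · have h4 := h3 (p * a + n + m - j) (by omega)
      rw [coeff_sub, mul_sub, mul_sub, coeff_sub, coeff_sub, ← pow_add, ← pow_add, ← mul_assoc, ← pow_add,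
        coeff_X_pow, coeff_X_pow, coeff_X_pow_mul', coeff_X_pow_mul', coeff_expand hp.pos] at h4
      have i1 : (p * a + n + m - j = p * a + n) ↔ j = m := by omega
      have i2 : (p * a + n + m - j = p * a + m) ↔ j = n := by omega
      have i3 : (n + m ≤ p * a + n + m - j) ↔ j ≤ p * a := by omega
      have i4 : (n + m + a * (p - 1) ≤ p * a + n + m - j) ↔ j ≤ a := by omega
      simp only [i1, i2, i3, i4] at h4
      have i5 : p * a + n + m - j - (n + m) = p * a - j := by omega
      have i6 : p * a + n + m - j - (n + m + a * (p - 1)) = a - j := by omega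
      rw [i5, i6] at h4
      have i7 : (if p ∣ j then c (j / p) else 0) = 
        if j ≤ p * a then if p ∣ p * a - j then v.coeff ((p * a - j) / p) else 0 else 0 := by
        by_cases hpj : p ∣ j
        · obtain ⟨k, rfl⟩ := hpj
          simp only [hc, dvd_mul_right, if_true, Nat.mul_div_cancel_left _ hp.pos,
            Nat.mul_le_mul_left_iff hp.pos, ← Nat.mul_sub]
        · rw [if_neg hpj]
          split_ifs with g1 g2
          · exact absurd ((Nat.dvd_sub_iff_right g1 (dvd_mul_right p a)).1 g2) hpj
          · rfl
          · rfl
      rw [i7]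
      simp only [hc]
      linear_combination -h4
    · have : ¬ j ≤ a := by omega
      have h5 : ¬ j = m := by omega
      have h6 : ¬ j = n := by omega
      simp only [hc, this, h5, h6, if_false]
      split_ifs with g1 g2
      · exfalso
        obtain ⟨k, rfl⟩ := g1
        rw [Nat.mul_div_cancel_left _ hp.pos] at g2
        have := Nat.mul_le_mul_left p g2
        omega
      all_goals simp
  have hlow : ∀ j, 1 ≤ j → j < n → c j = 0 := by
    intro j
    induction j using Nat.strong_induction_on with
    | _ j ih =>
      intro hj hjn
      have := key j hj
      rw [if_neg (show j ≠ m by omega), if_neg (show j ≠ n by omega)] at this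
      split_ifs at this with g
      · have hlt : j / p < j := Nat.div_lt_self hj hp.one_lt
        rw [ih _ hlt (Nat.div_pos (Nat.le_of_dvd hj g) hp.pos) (by omega)] at this
        linear_combination -this
      · linear_combination -this
  have hone : ∀ k, c (p ^ k * n) = 1 := by
    intro k
    induction k with
    | zero =>
      have := key n hn
      rw [if_neg (show n ≠ m by omega), if_pos rfl] at this
      rw [pow_zero, one_mul]
      split_ifs at this with g
      · have hlt : n / p < n := Nat.div_lt_self hn hp.one_lt
        rw [hlow _ (Nat.div_pos (Nat.le_of_dvd hn g) hp.pos) hlt] at this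
        linear_combination -this
      · linear_combination -this
    | succ k ih =>
      have e : p ^ (k+1) * n = p * (p ^ k * n) := by ring
      have hpos : 0 < p ^ k * n := Nat.mul_pos (pow_pos hp.pos k) hn
      have hgt : n < p ^ (k+1) * n := by
        have : 1 < p ^ (k+1) := Nat.one_lt_pow (by omega) hp.one_lt
        nlinarith
      have := key (p ^ (k+1) * n) (by omega)
      rw [if_neg (hs (k+1)).symm, if_neg hgt.ne', e, if_pos (dvd_mul_right _ _),
        Nat.mul_div_cancel_left _ hp.pos, ih, ← e] at this
      linear_combination -this
  have := hone a
  have hbig : a < p ^ a * n := lt_of_lt_of_le (Nat.lt_pow_self hp.one_lt) (Nat.le_mul_of_pos_right _ hn)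
  simp only [hc] at this
  rw [if_neg (by omega)] at this
  exact zero_ne_one this

open IsLocalRing in
theorem card_aux (R S : Type*) [CommRing R] [CommRing S] [Algebra R S] [IsLocalRing R]
    [Module.Finite R S] :
    Nat.card (S ⧸ (maximalIdeal R).map (algebraMap R S)) =
      Nat.card (R ⧸ maximalIdeal R) ^ Module.finrank (R ⧸ maximalIdeal R)
        (S ⧸ (maximalIdeal R).map (algebraMap R S)) := by
  let _ : Field (R ⧸ maximalIdeal R) := Ideal.Quotient.field _
  have h5 : Module.Finite (R ⧸ maximalIdeal R) (S ⧸ (maximalIdeal R).map (algebraMap R S)) :=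
    Module.Finite.of_restrictScalars_finite R _ _
  exact Module.natCard_eq_pow_finrank (K := R ⧸ maximalIdeal R)

theorem card_quot (p : ℕ) [Fact p.Prime] (K : Type*) [Field K] [Algebra ℚ_[p] K]
    [FiniteDimensional ℚ_[p] K]
    [Algebra ℤ_[p] K] [IsScalarTower ℤ_[p] ℚ_[p] K] :
    Nat.card (integralClosure ℤ_[p] K ⧸ Ideal.span {(p : integralClosure ℤ_[p] K)}) =
      p ^ Module.finrank ℚ_[p] K := by
  have : Module.IsTorsionFree ℤ_[p] K := .trans_faithfulSMul ℤ_[p] ℚ_[p] K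
  have h1 : Module.Finite ℤ_[p] (integralClosure ℤ_[p] K) := IsIntegralClosure.finite ℤ_[p] ℚ_[p] K _
  have h2 : Module.Free ℤ_[p] (integralClosure ℤ_[p] K) := IsIntegralClosure.module_free ℤ_[p] ℚ_[p] K _
  have h3 := IsIntegralClosure.rank ℤ_[p] ℚ_[p] K (integralClosure ℤ_[p] K)
  have hI : Ideal.span {(p : integralClosure ℤ_[p] K)} =
    (IsLocalRing.maximalIdeal ℤ_[p]).map (algebraMap ℤ_[p] (integralClosure ℤ_[p] K)) := by
    rw [PadicInt.maximalIdeal_eq_span_p, Ideal.map_span]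
    simp
  have h4 := IsLocalRing.finrank_quotient_map (R := ℤ_[p]) (S := integralClosure ℤ_[p] K)
  rw [hI, ← h3, ← h4]
  rw [card_aux]
  have h6 : Nat.card (ℤ_[p] ⧸ IsLocalRing.maximalIdeal ℤ_[p]) = p := by
    have := Nat.card_congr (PadicInt.residueField (p := p)).toEquiv
    rw [Nat.card_zmod] at this
    exact this
  rw [h6]

open Polynomial in
theorem bridge (p : ℕ) [Fact p.Prime] (R : Type*) [CommRing R] [IsDomain R] (π : R) (N : ℕ)
    (hN : 0 < N) (hp0 : (p : R) ≠ 0) (hπ : ¬ IsUnit π) (hsp : Ideal.span {(p : R)} = Ideal.span {π ^ N})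
    (hcard : Nat.card (R ⧸ Ideal.span {(p : R)}) = p ^ N) :
    ∃ φ : (ZMod p)[X] →+* R ⧸ Ideal.span {(p : R)}, Function.Surjective φ ∧
      φ X = Ideal.Quotient.mk _ π ∧ ∀ f, φ f = 0 ↔ X ^ N ∣ f := by
  have hp : p.Prime := Fact.out
  set I := Ideal.span {(p : R)} with hI
  have hpi0 : π ≠ 0 := by
    rintro rfl
    rw [zero_pow hN.ne', Ideal.span_singleton_eq_span_singleton] at hsp
    exact hp0 ((associated_zero_iff_eq_zero _).1 hsp)
  have hmem : ∀ x, Ideal.Quotient.mk I x = 0 ↔ π ^ N ∣ x := by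
    intro x
    rw [Ideal.Quotient.eq_zero_iff_mem, hsp, Ideal.mem_span_singleton]
  have hpA : ((p : ℕ) : R ⧸ I) = 0 := by
    rw [← map_natCast (Ideal.Quotient.mk I), Ideal.Quotient.eq_zero_iff_mem]
    exact Ideal.mem_span_singleton_self _
  have hnt : Nontrivial (R ⧸ I) := by
    refine ⟨1, 0, fun h => hπ ?_⟩
    rw [← map_one (Ideal.Quotient.mk I), hmem] at h
    exact isUnit_of_dvd_one ((dvd_pow_self π hN.ne').trans h)
  have hch : CharP (R ⧸ I) p := by
    have := CharP.ringChar_of_prime_eq_zero hp hpA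
    rw [← this]; infer_instance
  let φ : (ZMod p)[X] →+* R ⧸ I := eval₂RingHom (ZMod.castHom (dvd_refl p) (R ⧸ I)) (Ideal.Quotient.mk I π)
  have hX : φ X = Ideal.Quotient.mk I π := by simp [φ]
  have hXN : φ (X ^ N) = 0 := by rw [map_pow, hX, ← map_pow, hmem]
  have hz : ∀ f, φ f = 0 ↔ X ^ N ∣ f := by
    intro f
    constructor
    · intro h
      by_cases hf : f = 0
      · simp [hf]
      obtain ⟨a, u, hu, rfl⟩ := WfDvdMonoid.max_power_factor hf (prime_X (R := ZMod p)).irreducible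
      obtain ⟨v, b, hub⟩ : IsCoprime u (X ^ N) :=
        ((prime_X.irreducible.coprime_iff_not_dvd).2 hu).symm.pow_right
      have h1 : φ v * φ u = 1 := by
        have := congrArg φ hub
        rwa [map_add, map_mul, map_mul, hXN, mul_zero, add_zero, map_one] at this
      rw [map_mul, map_pow, hX, ← map_pow] at h
      have h2 : Ideal.Quotient.mk I (π ^ a) = 0 := by linear_combination φ v * h - Ideal.Quotient.mk I (π ^ a) * h1
      rw [hmem, pow_dvd_pow_iff hpi0 hπ] at h2
      exact (pow_dvd_pow _ h2).mul_right _
    · rintro ⟨g, rfl⟩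
      rw [map_mul, hXN, zero_mul]
  refine ⟨φ, ?_, hX, hz⟩
  let ψ : degreeLT (ZMod p) N → R ⧸ I := fun f => φ f.1
  have hψ : Function.Injective ψ := by
    intro f g h
    have h1 : φ (f.1 - g.1) = 0 := by rw [map_sub]; exact sub_eq_zero.2 h
    rw [hz] at h1
    apply Subtype.ext
    have h2 : (f.1 - g.1) ∈ degreeLT (ZMod p) N := (f - g).2
    rw [mem_degreeLT] at h2
    exact sub_eq_zero.1 (eq_zero_of_dvd_of_degree_lt h1 (by rwa [degree_X_pow]))
  have hfin : Finite (R ⧸ I) := Nat.finite_of_card_ne_zero (by rw [hcard]; exact (pow_pos hp.pos N).ne')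
  have hc : Nat.card (degreeLT (ZMod p) N) = p ^ N := by
    rw [Nat.card_congr (degreeLTEquiv (ZMod p) N).toEquiv, Nat.card_fun]
    simp
  have := ((Nat.bijective_iff_injective_and_card ψ).2 ⟨hψ, hc.trans hcard.symm⟩).2
  intro x
  obtain ⟨f, hf⟩ := this x
  exact ⟨f.1, hf⟩

set_option synthInstance.maxHeartbeats 1000000
set_option maxHeartbeats 1000000
theorem stmt8 (p : ℕ) [Fact p.Prime] (K : Type*) [Field K] [Algebra ℚ_[p] K]
    [FiniteDimensional ℚ_[p] K]
    [Algebra ℤ_[p] K] [IsScalarTower ℤ_[p] ℚ_[p] K]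
    (N : ℕ) (hN : N = Module.finrank ℚ_[p] K)
    [IsLocalRing (integralClosure ℤ_[p] K)]
    (htr : Ideal.span {(p : integralClosure ℤ_[p] K)} =
      (IsLocalRing.maximalIdeal (integralClosure ℤ_[p] K)) ^ N)
    (π : integralClosure ℤ_[p] K)
    (hπ : Ideal.span {π} = IsLocalRing.maximalIdeal (integralClosure ℤ_[p] K))
    (n m : ℕ) (hn : 0 < n) (hnm : n ≤ m) (hmN : 3 * m < N) :
    (∃ s : ℕ, m = p ^ s * n) ↔
      ∃ α : integralClosure ℤ_[p] K,
        α ^ p * (π ^ n - π ^ m) - π ^ (n + m) * (1 - α ^ (p - 1)) ∈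
          Ideal.span {(p : integralClosure ℤ_[p] K)} ∧
        α ^ (3 * p) ∉ Ideal.span {(p : integralClosure ℤ_[p] K)} := by
  have hp : p.Prime := Fact.out
  have hN0 : 0 < N := by omega
  have hp0 : (p : integralClosure ℤ_[p] K) ≠ 0 := by
    have : CharZero K := charZero_of_injective_algebraMap (algebraMap ℚ_[p] K).injective
    intro h
    have h' := congrArg (Subtype.val) h
    simp at h'
    exact hp.ne_zero h'
  have hu : ¬ IsUnit π := by
    rw [← Ideal.span_singleton_eq_top, hπ]
    exact (IsLocalRing.maximalIdeal.isMaximal _).ne_top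
  rw [← hπ, Ideal.span_singleton_pow] at htr
  have hcard := card_quot p K
  rw [← hN] at hcard
  obtain ⟨φ, hs, hX, hz⟩ := bridge p _ π N hN0 hp0 hu htr hcard
  constructor
  · intro h
    obtain ⟨f, h1, h2⟩ := poly_fwd p N n m hn hmN h
    obtain ⟨α, hα⟩ := Ideal.Quotient.mk_surjective (φ f)
    refine ⟨α, ?_, ?_⟩
    · rw [← Ideal.Quotient.eq_zero_iff_mem]
      rw [← hz] at h1
      simpa [hα, hX] using h1
    · rw [← Ideal.Quotient.eq_zero_iff_mem]
      rw [← hz] at h2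
      simpa only [map_pow, hα] using h2
  · rintro ⟨α, h1, h2⟩
    obtain ⟨f, hf⟩ := hs (Ideal.Quotient.mk _ α)
    rw [← Ideal.Quotient.eq_zero_iff_mem] at h1 h2
    refine poly_bwd p N n m hn hnm hmN f ?_ ?_
    · rw [← hz]
      simpa [hf, hX] using h1
    · rw [← hz]
      simpa only [map_pow, hf] using h2
end

section
/- Let p be a prime. Let A = 𝔽_p[t^{1/∞}] be the monoid algebra of the additive monoid ℚ_{≥0} of nonnegative rationals over 𝔽_p (the ring of 'polynomials in all rational powers t^q, q ∈ ℚ_{≥0}'), and let R = A/(t), the quotient of A by the ideal generated by the monomial t = t^1 (the basis element corresponding to 1 ∈ ℚ_{≥0}). Then for every existential sentence φ of the first-order language of rings (i.e. φ is the existential closure of a quantifier-free formula), R satisfies φ if and only if 𝔽_p[X]/(X^N) satisfies φ for all sufficiently large natural numbers N. -/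
open FirstOrder FirstOrder.Ring Polynomial

lemma aux_transfer {S T : Type} [CommRing S] [CommRing T] (f : S →+* T)
    (hf : Function.Injective f) (k : ℕ)
    (ψ : FirstOrder.Language.ring.BoundedFormula Empty k) (hψ : ψ.IsQF)
    (v : Empty → S) (v' : Empty → T) (xs : Fin k → S) :
    letI : CompatibleRing S := compatibleRingOfRing S
    letI : CompatibleRing T := compatibleRingOfRing T
    (ψ.Realize v' (f ∘ xs) ↔ ψ.Realize v xs) := by
  let _ : CompatibleRing S := compatibleRingOfRing S
  let _ : CompatibleRing T := compatibleRingOfRing T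
  let e : S ↪[FirstOrder.Language.ring] T :=
    { toFun := f
      inj' := hf
      map_fun' := fun {n} g xs => by cases g <;> simp
      map_rel' := fun {n} r => by cases r }
  have := hψ.realize_embedding e (v := v) (xs := xs)
  rw [Subsingleton.elim v' (e ∘ v)]
  exact this

lemma aux_emb (p : ℕ) [Fact p.Prime] {B : Type} [CommRing B] [Algebra (ZMod p) B] (x : B)
    (m : ℕ) (hm : 0 < m) (h0 : x ^ m = 0) (h1 : x ^ (m - 1) ≠ 0) :
    ∃ f : (Polynomial (ZMod p) ⧸ Ideal.span {(X : Polynomial (ZMod p)) ^ m}) →+* B,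
      Function.Injective f ∧ ∀ q, f (Ideal.Quotient.mk _ q) = aeval x q := by
  have hker : RingHom.ker (aeval (R := ZMod p) x).toRingHom = Ideal.span {(X : Polynomial (ZMod p)) ^ m} := by
    obtain ⟨g, hg⟩ := IsPrincipalIdealRing.principal (RingHom.ker (aeval (R := ZMod p) x).toRingHom)
    change _ = Ideal.span {g} at hg
    have hX : (X : Polynomial (ZMod p)) ^ m ∈ RingHom.ker (aeval (R := ZMod p) x).toRingHom := by
      simp [RingHom.mem_ker, h0]
    rw [hg, Ideal.mem_span_singleton, dvd_prime_pow Polynomial.prime_X] at hX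
    obtain ⟨i, hi, ha⟩ := hX
    rw [hg, Ideal.span_singleton_eq_span_singleton]
    rcases hi.eq_or_lt with rfl | hlt
    · exact ha
    · exfalso
      apply h1
      have : (X : Polynomial (ZMod p)) ^ (m - 1) ∈ RingHom.ker (aeval (R := ZMod p) x).toRingHom := by
        rw [hg, Ideal.mem_span_singleton]
        exact ha.dvd.trans (pow_dvd_pow _ (by omega))
      simpa [RingHom.mem_ker] using this
  refine ⟨Ideal.Quotient.lift _ (aeval (R := ZMod p) x).toRingHom
    (fun a ha => by rw [← hker] at ha; exact ha), ?_, fun q => by simp⟩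
  exact Ideal.injective_lift_iff _ |>.2 hker

lemma aux_not_mem (p : ℕ) [Fact p.Prime] (q : ℚ≥0) (hq : q < 1) :
    AddMonoidAlgebra.single q (1 : ZMod p) ∉
      Ideal.span {AddMonoidAlgebra.single (1 : ℚ≥0) (1 : ZMod p)} := by
  rw [Ideal.mem_span_singleton]
  rintro ⟨g, hg⟩
  have := congrArg (fun z => z.coeff q) hg
  change _ = (AddMonoidAlgebra.single (1 : ℚ≥0) (1 : ZMod p) * g).coeff q at this
  rw [AddMonoidAlgebra.coeff_single_mul_of_forall_add_ne] at this
  · simp at this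
  · rintro d rfl
    simp at hq

lemma aux_mem (p : ℕ) [Fact p.Prime] (r : AddMonoidAlgebra (ZMod p) ℚ≥0) :
    ∃ m : ℕ, 0 < m ∧ ∀ k : ℕ, 0 < k → m ∣ k → ∃ P : Polynomial (ZMod p),
      aeval (AddMonoidAlgebra.single ((k : ℚ≥0)⁻¹) (1 : ZMod p)) P = r := by
  induction r using AddMonoidAlgebra.induction_linear with
  | zero => exact ⟨1, one_pos, fun k _ _ => ⟨0, by simp⟩⟩
  | add f g hf hg =>
    obtain ⟨m, hm, h⟩ := hf
    obtain ⟨m', hm', h'⟩ := hg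
    refine ⟨m * m', by positivity, fun k hk hd => ?_⟩
    obtain ⟨P, hP⟩ := h k hk ((dvd_mul_right _ _).trans hd)
    obtain ⟨Q, hQ⟩ := h' k hk ((dvd_mul_left _ _).trans hd)
    exact ⟨P + Q, by simp [hP, hQ]⟩
  | single q a =>
    refine ⟨q.den, q.den_pos, fun k hk hd => ?_⟩
    obtain ⟨c, rfl⟩ := hd
    refine ⟨C a * X ^ (q.num * c), ?_⟩
    have hc : 0 < c := by
      rcases Nat.eq_zero_or_pos c with rfl | h
      · simp at hk
      · exact h
    have e : ((q.num * c : ℕ) : ℚ≥0) * ((q.den * c : ℕ) : ℚ≥0)⁻¹ = q := by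
      conv_rhs => rw [← NNRat.num_div_den q]
      have : (q.den : ℚ≥0) ≠ 0 := by exact_mod_cast q.den_pos.ne'
      have : (c : ℚ≥0) ≠ 0 := by exact_mod_cast hc.ne'
      push_cast
      field_simp
    rw [map_mul, aeval_C, map_pow, aeval_X, AddMonoidAlgebra.single_pow, nsmul_eq_mul, e,
      one_pow, ← Algebra.smul_def, AddMonoidAlgebra.smul_single]
    simp

theorem stmt9 (p : ℕ) [Fact p.Prime] (k : ℕ)
    (ψ : FirstOrder.Language.ring.BoundedFormula Empty k) (hψ : ψ.IsQF) :
    letI R := AddMonoidAlgebra (ZMod p) ℚ≥0 ⧸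
      Ideal.span {AddMonoidAlgebra.single (1 : ℚ≥0) (1 : ZMod p)}
    letI : CompatibleRing R := compatibleRingOfRing R
    letI : ∀ N : ℕ, CompatibleRing (Polynomial (ZMod p) ⧸
        Ideal.span {(X : Polynomial (ZMod p)) ^ N}) :=
      fun N => compatibleRingOfRing _
    (R ⊨ ψ.exs ↔ ∃ N₀ : ℕ, ∀ N : ℕ, N₀ ≤ N →
      (Polynomial (ZMod p) ⧸ Ideal.span {(X : Polynomial (ZMod p)) ^ N}) ⊨ ψ.exs) := by
  have hR : ∀ m : ℕ, 0 < m →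
      ∃ f : (Polynomial (ZMod p) ⧸ Ideal.span {(X : Polynomial (ZMod p)) ^ m}) →+* (AddMonoidAlgebra (ZMod p) ℚ≥0 ⧸
      Ideal.span {AddMonoidAlgebra.single (1 : ℚ≥0) (1 : ZMod p)}),
      Function.Injective f ∧ ∀ q, f (Ideal.Quotient.mk _ q) =
        Ideal.Quotient.mk _ (aeval (AddMonoidAlgebra.single ((m : ℚ≥0)⁻¹) (1 : ZMod p)) q) := by
    intro m hm
    have hm' : (m : ℚ≥0) ≠ 0 := by exact_mod_cast hm.ne'
    obtain ⟨f, hf, h⟩ := aux_emb p (B := (AddMonoidAlgebra (ZMod p) ℚ≥0 ⧸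
      Ideal.span {AddMonoidAlgebra.single (1 : ℚ≥0) (1 : ZMod p)}))
      (Ideal.Quotient.mk _ (AddMonoidAlgebra.single ((m : ℚ≥0)⁻¹) (1 : ZMod p))) m hm
      (by
        rw [← map_pow, AddMonoidAlgebra.single_pow, nsmul_eq_mul, mul_inv_cancel₀ hm', one_pow,
          Ideal.Quotient.eq_zero_iff_mem]
        exact Ideal.mem_span_singleton_self _)
      (by
        rw [← map_pow, AddMonoidAlgebra.single_pow, nsmul_eq_mul, one_pow, Ne,
          Ideal.Quotient.eq_zero_iff_mem]
        apply aux_not_mem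
        rw [← div_eq_mul_inv, div_lt_one (by positivity)]
        exact_mod_cast Nat.sub_lt hm one_pos)
    refine ⟨f, hf, fun q => ?_⟩
    rw [h]
    exact Polynomial.aeval_algHom_apply
      (Ideal.Quotient.mkₐ (ZMod p) (Ideal.span {AddMonoidAlgebra.single (1 : ℚ≥0) (1 : ZMod p)})) _ q
  have hN : ∀ m N : ℕ, 0 < m → m * m < N →
      ∃ f : (Polynomial (ZMod p) ⧸ Ideal.span {(X : Polynomial (ZMod p)) ^ m}) →+*
        (Polynomial (ZMod p) ⧸ Ideal.span {(X : Polynomial (ZMod p)) ^ N}),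
      Function.Injective f := by
    intro m N hm hmN
    have hd := Nat.div_add_mod N m
    have hl := Nat.mod_lt N hm
    set d := N / m
    have hdm : m ≤ d := by
      rw [Nat.le_div_iff_mul_le hm]; exact hmN.le
    obtain ⟨f, hf, -⟩ := aux_emb p
      (Ideal.Quotient.mk (Ideal.span {(X : Polynomial (ZMod p)) ^ N}) (X ^ (d + 1))) m hm
      (by
        rw [← map_pow, ← pow_mul, Ideal.Quotient.eq_zero_iff_mem, Ideal.mem_span_singleton]
        exact pow_dvd_pow _ (by nlinarith))
      (by
        rw [← map_pow, ← pow_mul, Ne, Ideal.Quotient.eq_zero_iff_mem, Ideal.mem_span_singleton,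
          pow_dvd_pow_iff X_ne_zero not_isUnit_X, not_le]
        obtain ⟨n, rfl⟩ : ∃ n, m = n + 1 := ⟨m - 1, by omega⟩
        simp only [Nat.add_sub_cancel]
        have := Nat.zero_le (N % (n + 1))
        have e1 : (n + 1) * d = n * d + d := by ring
        have e2 : (d + 1) * n = n * d + n := by ring
        omega)
    exact ⟨f, hf⟩
  simp only [Language.Sentence.Realize, Language.BoundedFormula.realize_exs]
  constructor
  · rintro ⟨xs, hxs⟩
    choose ys hys using fun i => Ideal.Quotient.mk_surjective (xs i)
    choose ms hms0 hms using fun i => aux_mem p (ys i)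
    set m := ∏ i, ms i
    have hm : 0 < m := Finset.prod_pos (fun i _ => hms0 i)
    choose Ps hPs using fun i => hms i m hm (Finset.dvd_prod_of_mem _ (Finset.mem_univ i))
    obtain ⟨f, hf, h⟩ := hR m hm
    have hx : xs = f ∘ (fun i => Ideal.Quotient.mk _ (Ps i)) := by
      funext i
      simp only [Function.comp, h, hPs, hys]
    rw [hx] at hxs
    have h1 := (aux_transfer f hf k ψ hψ default _ _).1 hxs
    refine ⟨m * m + 1, fun N hNN => ?_⟩
    obtain ⟨g, hg⟩ := hN m N hm hNN
    exact ⟨_, (aux_transfer g hg k ψ hψ default _ _).2 h1⟩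
  · rintro ⟨N₀, h⟩
    obtain ⟨xs, hxs⟩ := h (N₀ + 1) (by omega)
    obtain ⟨f, hf, -⟩ := hR (N₀ + 1) (by omega)
    exact ⟨_, (aux_transfer f hf k ψ hψ _ _ _).2 hxs⟩
end
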